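/- arXiv:2409.10182 — 2 statements merged into one kernel-verified Lean document; each statement's English description precedes it below -/
import Mathlib

section
/- For any operator A on ℂ^d ⊗ ℂ^d, the second-order twirl M_2(A) = ∫_{U(d)} u^{†⊗2} A u^{⊗2} dμ(u) equals (Tr(A)/(d²-1) − Tr(AF)/(d(d²-1))) I + (Tr(AF)/(d²-1) − Tr(A)/(d(d²-1))) F, where F is the swap operator. -/
open MeasureTheory Matrix
open scoped Kronecker

noncomputable instance matrixMeasurableSpace {m n : Type*} :
    MeasurableSpace (Matrix m n ℂ) :=
  inferInstanceAs (MeasurableSpace (m → n → ℂ))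

/-- The swap operator `F` on `ℂ^d ⊗ ℂ^d`. -/
noncomputable def swapM (d : ℕ) : Matrix (Fin d × Fin d) (Fin d × Fin d) ℂ :=
  Matrix.of fun r c => if r = Prod.swap c then 1 else 0

section Twirl

variable {d : ℕ}

lemma tw_entry_meas (i j : Fin d) :
    Measurable (fun u : Matrix.unitaryGroup (Fin d) ℂ => (u : Matrix (Fin d) (Fin d) ℂ) i j) :=
  (measurable_pi_apply j).comp ((measurable_pi_apply i).comp measurable_subtype_coe)

lemma tw_mul_meas (v : Matrix.unitaryGroup (Fin d) ℂ) :
    Measurable (fun u : Matrix.unitaryGroup (Fin d) ℂ => v * u) := by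
  refine Measurable.subtype_mk (f := fun u : Matrix.unitaryGroup (Fin d) ℂ =>
    (v : Matrix (Fin d) (Fin d) ℂ) * (u : Matrix (Fin d) (Fin d) ℂ)) ?_
  refine measurable_pi_lambda _ fun i => measurable_pi_lambda _ fun j => ?_
  simp only [Matrix.mul_apply]
  exact Finset.measurable_sum _ fun k _ => (tw_entry_meas k j).const_mul _

/-- The monomial whose integrals determine the twirl. -/
noncomputable def twF (p q : Fin d × Fin d) (i j k l : Fin d) (u : Matrix (Fin d) (Fin d) ℂ) : ℂ :=
  star (u i p.1) * star (u j p.2) * (u k q.1 * u l q.2)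

lemma twF_meas (p q : Fin d × Fin d) (i j k l : Fin d) :
    Measurable (fun u : Matrix.unitaryGroup (Fin d) ℂ => twF p q i j k l u) := by
  unfold twF
  have h := fun i j : Fin d => tw_entry_meas i j
  have hs : ∀ i j : Fin d, Measurable (fun u : Matrix.unitaryGroup (Fin d) ℂ =>
      star ((u : Matrix (Fin d) (Fin d) ℂ) i j)) := fun i j =>
    continuous_star.measurable.comp (h i j)
  exact ((hs _ _).mul (hs _ _)).mul ((h _ _).mul (h _ _))

lemma twF_int (μ : Measure (Matrix.unitaryGroup (Fin d) ℂ)) [IsProbabilityMeasure μ]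
    (p q : Fin d × Fin d) (i j k l : Fin d) :
    Integrable (fun u : Matrix.unitaryGroup (Fin d) ℂ => twF p q i j k l u) μ := by
  refine Integrable.of_bound (twF_meas p q i j k l).aestronglyMeasurable 1 ?_
  refine Filter.Eventually.of_forall fun u => ?_
  have h := fun i j => entry_norm_bound_of_unitary u.2 i j
  simp only [twF, norm_mul, norm_star]
  exact mul_le_one₀ (mul_le_one₀ (h _ _) (norm_nonneg _) (h _ _)) (by positivity)
    (mul_le_one₀ (h _ _) (norm_nonneg _) (h _ _))

noncomputable def twT (μ : Measure (Matrix.unitaryGroup (Fin d) ℂ))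
    (p q : Fin d × Fin d) (i j k l : Fin d) : ℂ := ∫ u, twF p q i j k l u ∂μ

lemma twT_inv (μ : Measure (Matrix.unitaryGroup (Fin d) ℂ))
    (hinv : ∀ v : Matrix.unitaryGroup (Fin d) ℂ, Measure.map (fun u => v * u) μ = μ)
    (p q : Fin d × Fin d) (i j k l : Fin d) (v : Matrix.unitaryGroup (Fin d) ℂ) :
    twT μ p q i j k l = ∫ u, twF p q i j k l
      ((v : Matrix (Fin d) (Fin d) ℂ) * (u : Matrix (Fin d) (Fin d) ℂ)) ∂μ := by
  unfold twT
  conv_lhs => rw [← hinv v]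
  rw [integral_map (tw_mul_meas v).aemeasurable (twF_meas p q i j k l).aestronglyMeasurable]
  rfl

lemma twT_diag (μ : Measure (Matrix.unitaryGroup (Fin d) ℂ))
    (hinv : ∀ v : Matrix.unitaryGroup (Fin d) ℂ, Measure.map (fun u => v * u) μ = μ)
    (p q : Fin d × Fin d) (i j k l : Fin d) (e : Fin d → ℂ) (he : ∀ i, e i * star (e i) = 1) :
    twT μ p q i j k l = (star (e i) * star (e j) * (e k * e l)) * twT μ p q i j k l := by
  have hm : Matrix.diagonal e ∈ Matrix.unitaryGroup (Fin d) ℂ := by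
    rw [Matrix.mem_unitaryGroup_iff, Matrix.star_eq_conjTranspose, Matrix.diagonal_conjTranspose,
      Matrix.diagonal_mul_diagonal]
    rw [← Matrix.diagonal_one]
    congr 1
    funext i
    exact he i
  rw [twT_inv μ hinv p q i j k l ⟨_, hm⟩]
  conv_rhs => rw [← twT_inv μ hinv p q i j k l ⟨_, hm⟩]
  unfold twT
  rw [← integral_const_mul]
  refine integral_congr_ae (Filter.Eventually.of_forall fun u => ?_)
  simp only [twF, Matrix.diagonal_mul, star_mul']
  ring

lemma twT_perm (μ : Measure (Matrix.unitaryGroup (Fin d) ℂ))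
    (hinv : ∀ v : Matrix.unitaryGroup (Fin d) ℂ, Measure.map (fun u => v * u) μ = μ)
    (p q : Fin d × Fin d) (i j k l : Fin d) (σ : Equiv.Perm (Fin d)) :
    twT μ p q i j k l = twT μ p q (σ i) (σ j) (σ k) (σ l) := by
  have hm : (Matrix.of fun i j => if σ i = j then (1 : ℂ) else 0)
      ∈ Matrix.unitaryGroup (Fin d) ℂ := by
    rw [Matrix.mem_unitaryGroup_iff]
    ext i j
    simp [Matrix.mul_apply, Matrix.star_apply, Matrix.one_apply, apply_ite, eq_comm]
  rw [twT_inv μ hinv p q i j k l ⟨_, hm⟩]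
  unfold twT
  simp [twF, Matrix.mul_apply]

lemma twT_rot (μ : Measure (Matrix.unitaryGroup (Fin d) ℂ)) [IsProbabilityMeasure μ]
    (hinv : ∀ v : Matrix.unitaryGroup (Fin d) ℂ, Measure.map (fun u => v * u) μ = μ)
    (p q : Fin d × Fin d) (a b : Fin d) (hab : a ≠ b) :
    twT μ p q a a a a = ∑ s : Bool, ∑ t : Bool, ∑ x : Bool, ∑ y : Bool,
      ((if s then (3/5 : ℂ) else -4/5) * (if t then (3/5 : ℂ) else -4/5) *
        ((if x then (3/5 : ℂ) else -4/5) * (if y then (3/5 : ℂ) else -4/5))) *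
      twT μ p q (if s then a else b) (if t then a else b) (if x then a else b)
        (if y then a else b) := by
  set v : Fin d → ℂ := Pi.single a 1 + Pi.single b 2 with hv
  have hvv : v ⬝ᵥ v = 5 := by
    simp [hv, hab, hab.symm]; norm_num
  have hsv : star v = v := by
    funext i
    simp only [hv, Pi.star_apply, Pi.add_apply, Pi.single_apply]
    split_ifs <;> simp
  have hm : (1 - (2/5 : ℂ) • Matrix.vecMulVec v v) ∈ Matrix.unitaryGroup (Fin d) ℂ := by
    rw [Matrix.mem_unitaryGroup_iff]
    have h1 : star (1 - (2/5 : ℂ) • Matrix.vecMulVec v v) = 1 - (2/5 : ℂ) • Matrix.vecMulVec v v := by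
      rw [star_sub, star_one, star_smul, Matrix.star_eq_conjTranspose,
        Matrix.conjTranspose_vecMulVec, hsv]
      simp
    rw [h1]
    have h2 : Matrix.vecMulVec v v * Matrix.vecMulVec v v = (5 : ℂ) • Matrix.vecMulVec v v := by
      rw [Matrix.vecMulVec_mul_vecMulVec, hvv]
      simp [Matrix.vecMulVec_smul]
    simp only [sub_mul, mul_sub, one_mul, mul_one, smul_mul_assoc, mul_smul_comm, h2]
    module
  have hrow : ∀ (u : Matrix (Fin d) (Fin d) ℂ) (c : Fin d),
      ((1 - (2/5 : ℂ) • Matrix.vecMulVec v v) * u) a c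
        = ∑ s : Bool, (if s then (3/5 : ℂ) else -4/5) * u (if s then a else b) c := by
    intro u c
    rw [sub_mul, one_mul, smul_mul_assoc, Matrix.vecMulVec_mul]
    simp only [Matrix.sub_apply, Matrix.smul_apply, Matrix.vecMulVec_apply, hv,
      Matrix.add_vecMul, Matrix.single_vecMul, Pi.add_apply]
    simp [hab]
    ring
  rw [twT_inv μ hinv p q a a a a ⟨_, hm⟩]
  have hst : ∀ s : Bool, star (if s then (3/5 : ℂ) else -4/5) = if s then (3/5 : ℂ) else -4/5 := by
    intro s; cases s <;> simp
  have hI := twF_int μ p q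
  have key : ∀ u : Matrix.unitaryGroup (Fin d) ℂ, twF p q a a a a
      ((1 - (2/5 : ℂ) • Matrix.vecMulVec v v) * (u : Matrix (Fin d) (Fin d) ℂ)) =
      ∑ s : Bool, ∑ t : Bool, ∑ x : Bool, ∑ y : Bool,
      ((if s then (3/5 : ℂ) else -4/5) * (if t then (3/5 : ℂ) else -4/5) *
        ((if x then (3/5 : ℂ) else -4/5) * (if y then (3/5 : ℂ) else -4/5))) *
      twF p q (if s then a else b) (if t then a else b) (if x then a else b)
        (if y then a else b) u := by
    intro u
    unfold twF
    simp only [hrow, star_sum, star_mul', hst]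
    rw [Finset.sum_mul_sum, Finset.sum_mul_sum, Finset.sum_mul]
    refine Finset.sum_congr rfl fun s _ => ?_
    rw [Finset.sum_mul]
    refine Finset.sum_congr rfl fun t _ => ?_
    rw [Finset.mul_sum]
    refine Finset.sum_congr rfl fun x _ => ?_
    rw [Finset.mul_sum]
    refine Finset.sum_congr rfl fun y _ => ?_
    ring
  simp only [key]
  unfold twT
  rw [integral_finsetSum _ fun s _ => integrable_finsetSum _ fun t _ =>
    integrable_finsetSum _ fun x _ => integrable_finsetSum _ fun y _ => (hI _ _ _ _).const_mul _]
  refine Finset.sum_congr rfl fun s _ => ?_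
  rw [integral_finsetSum _ fun t _ =>
    integrable_finsetSum _ fun x _ => integrable_finsetSum _ fun y _ => (hI _ _ _ _).const_mul _]
  refine Finset.sum_congr rfl fun t _ => ?_
  rw [integral_finsetSum _ fun x _ => integrable_finsetSum _ fun y _ => (hI _ _ _ _).const_mul _]
  refine Finset.sum_congr rfl fun x _ => ?_
  rw [integral_finsetSum _ fun y _ => (hI _ _ _ _).const_mul _]
  refine Finset.sum_congr rfl fun y _ => ?_
  rw [integral_const_mul]

lemma twT_zero (μ : Measure (Matrix.unitaryGroup (Fin d) ℂ))
    (hinv : ∀ v : Matrix.unitaryGroup (Fin d) ℂ, Measure.map (fun u => v * u) μ = μ)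
    (p q : Fin d × Fin d) (i j k l : Fin d) (h : ¬ ((i = k ∧ j = l) ∨ (i = l ∧ j = k))) :
    twT μ p q i j k l = 0 := by
  by_contra hT
  have hph : ∀ m : Fin d, star (if i = m then Complex.I else 1) * star (if j = m then Complex.I else 1)
      * ((if k = m then Complex.I else 1) * (if l = m then Complex.I else 1)) = 1 := by
    intro m
    have := twT_diag μ hinv p q i j k l (fun r => if r = m then Complex.I else 1) (by
      intro r; split_ifs <;> simp)
    exact mul_right_cancel₀ hT (by rw [one_mul]; exact this.symm)
  have hI1 : Complex.I ≠ 1 := fun h => by simpa using congrArg Complex.im h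
  have hI2 : -Complex.I ≠ 1 := fun h => by simpa using congrArg Complex.im h
  have hI3 : (-1 : ℂ) ≠ 1 := by norm_num
  have hi := hph i
  have hj := hph j
  clear hph
  by_cases h1 : i = j <;> by_cases h2 : i = k <;> by_cases h3 : i = l <;> by_cases h4 : j = k <;>
    by_cases h5 : j = l <;>
    simp_all [eq_comm]

lemma tw_exists_perm (a b i j : Fin d) (hab : a ≠ b) (hij : i ≠ j) :
    ∃ σ : Equiv.Perm (Fin d), σ a = i ∧ σ b = j := by
  refine ⟨Equiv.swap (Equiv.swap a i b) j * Equiv.swap a i, ?_, ?_⟩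
  · have : i ≠ Equiv.swap a i b := by
      intro h
      apply hab
      apply (Equiv.swap a i).injective
      rw [← h, Equiv.swap_apply_left]
    simp [Equiv.swap_apply_of_ne_of_ne this hij]
  · simp

lemma twT_eq (μ : Measure (Matrix.unitaryGroup (Fin d) ℂ)) [IsProbabilityMeasure μ]
    (hinv : ∀ v : Matrix.unitaryGroup (Fin d) ℂ, Measure.map (fun u => v * u) μ = μ)
    (p q : Fin d × Fin d) (hd : 2 ≤ d) :
    ∃ β γ : ℂ, ∀ i j k l, twT μ p q i j k l =
      β * (if (i, j) = (k, l) then 1 else 0) + γ * (if (i, j) = (l, k) then 1 else 0) := by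
  obtain ⟨a, b, hab⟩ : ∃ a b : Fin d, a ≠ b := ⟨⟨0, by omega⟩, ⟨1, by omega⟩, by simp⟩
  refine ⟨twT μ p q a b a b, twT μ p q a b b a, ?_⟩
  have hβ : ∀ i j, i ≠ j → twT μ p q i j i j = twT μ p q a b a b := by
    intro i j hij
    obtain ⟨σ, rfl, rfl⟩ := tw_exists_perm a b i j hab hij
    exact (twT_perm μ hinv p q a b a b σ).symm
  have hγ : ∀ i j, i ≠ j → twT μ p q i j j i = twT μ p q a b b a := by
    intro i j hij
    obtain ⟨σ, rfl, rfl⟩ := tw_exists_perm a b i j hab hij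
    exact (twT_perm μ hinv p q a b b a σ).symm
  have hα : ∀ i, twT μ p q i i i i = twT μ p q a a a a := by
    intro i
    rw [twT_perm μ hinv p q a a a a (Equiv.swap a i)]
    simp
  have hrot : twT μ p q a a a a = twT μ p q a b a b + twT μ p q a b b a := by
    have h := twT_rot μ hinv p q a b hab
    have z := twT_zero μ hinv p q
    simp only [Fintype.sum_bool, if_true, Bool.false_eq_true, if_false] at h
    rw [z a a a b (by simp [hab]), z a a b a (by simp [hab]), z a b a a (by simp [hab.symm]),
      z b a a a (by simp [hab.symm]), z a a b b (by simp [hab]), z b b a a (by simp [hab.symm]),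
      z a b b b (by simp [hab]), z b a b b (by simp [hab]), z b b a b (by simp [hab.symm]),
      z b b b a (by simp [hab.symm]), hβ b a hab.symm, hγ b a hab.symm, hα b] at h
    linear_combination (625/288 : ℂ) * h
  intro i j k l
  by_cases h1 : i = k ∧ j = l
  · obtain ⟨rfl, rfl⟩ := h1
    by_cases hij : i = j
    · subst hij; simp [hα, hrot]
    · simp [hβ i j hij, hij]
  · by_cases h2 : i = l ∧ j = k
    · obtain ⟨rfl, rfl⟩ := h2
      have hij : i ≠ j := fun h => h1 ⟨h, h.symm⟩
      simp [hγ i j hij, hij]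
    · rw [twT_zero μ hinv p q i j k l (by tauto)]
      simp [h1, h2]

lemma tw_integral (μ : Measure (Matrix.unitaryGroup (Fin d) ℂ)) [IsProbabilityMeasure μ]
    (p q : Fin d × Fin d) (A : Matrix (Fin d × Fin d) (Fin d × Fin d) ℂ) :
    (∫ u, (((star (u : Matrix (Fin d) (Fin d) ℂ)) ⊗ₖ (star (u : Matrix (Fin d) (Fin d) ℂ)))
          * A * ((u : Matrix (Fin d) (Fin d) ℂ) ⊗ₖ (u : Matrix (Fin d) (Fin d) ℂ))) p q ∂μ)
      = ∑ s : Fin d × Fin d, ∑ r : Fin d × Fin d, A r s * twT μ p q r.1 r.2 s.1 s.2 := by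
  have key : ∀ u : Matrix.unitaryGroup (Fin d) ℂ,
      (((star (u : Matrix (Fin d) (Fin d) ℂ)) ⊗ₖ (star (u : Matrix (Fin d) (Fin d) ℂ)))
          * A * ((u : Matrix (Fin d) (Fin d) ℂ) ⊗ₖ (u : Matrix (Fin d) (Fin d) ℂ))) p q
      = ∑ s : Fin d × Fin d, ∑ r : Fin d × Fin d, A r s * twF p q r.1 r.2 s.1 s.2 u := by
    intro u
    rw [Matrix.mul_apply]
    refine Finset.sum_congr rfl fun s _ => ?_
    rw [Matrix.mul_apply, Finset.sum_mul]
    refine Finset.sum_congr rfl fun r _ => ?_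
    simp only [Matrix.kroneckerMap_apply, Matrix.star_apply, twF]
    ring
  simp only [key]
  have hI := twF_int μ p q
  rw [integral_finsetSum _ fun s _ => integrable_finsetSum _ fun r _ => (hI _ _ _ _).const_mul _]
  refine Finset.sum_congr rfl fun s _ => ?_
  rw [integral_finsetSum _ fun r _ => (hI _ _ _ _).const_mul _]
  refine Finset.sum_congr rfl fun r _ => ?_
  rw [integral_const_mul]
  rfl

lemma tw_swap_comm (u : Matrix (Fin d) (Fin d) ℂ) :
    swapM d * (u ⊗ₖ u) = (u ⊗ₖ u) * swapM d := by
  ext ⟨i, j⟩ ⟨k, l⟩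
  simp [swapM, Matrix.mul_apply, Fintype.sum_prod_type, Prod.ext_iff, ite_and, mul_comm]

lemma tw_unit (u : Matrix.unitaryGroup (Fin d) ℂ) :
    ((star (u : Matrix (Fin d) (Fin d) ℂ)) ⊗ₖ (star (u : Matrix (Fin d) (Fin d) ℂ)))
      * ((u : Matrix (Fin d) (Fin d) ℂ) ⊗ₖ (u : Matrix (Fin d) (Fin d) ℂ)) = 1 := by
  rw [← Matrix.mul_kronecker_mul, Matrix.mem_unitaryGroup_iff'.mp u.2, Matrix.one_kronecker_one]

end Twirl

/-- The second-order twirl: for any `A` on `ℂ^d ⊗ ℂ^d` and Haar (left-invariant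
probability) measure on `U(d)`,
`∫ u^{†⊗2} A u^{⊗2} dμ(u) = (Tr(A)/(d²-1) − Tr(AF)/(d(d²-1))) I
  + (Tr(AF)/(d²-1) − Tr(A)/(d(d²-1))) F`. -/
theorem stmt_9 (d : ℕ) (hd : 2 ≤ d)
    (A : Matrix (Fin d × Fin d) (Fin d × Fin d) ℂ)
    (μ : Measure ↥(Matrix.unitaryGroup (Fin d) ℂ)) [IsProbabilityMeasure μ]
    (hinv : ∀ v : Matrix.unitaryGroup (Fin d) ℂ,
      Measure.map (fun u => v * u) μ = μ) :
    ∀ p q : Fin d × Fin d,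
      (∫ u, (((star (u : Matrix (Fin d) (Fin d) ℂ)) ⊗ₖ (star (u : Matrix (Fin d) (Fin d) ℂ)))
          * A * ((u : Matrix (Fin d) (Fin d) ℂ) ⊗ₖ (u : Matrix (Fin d) (Fin d) ℂ))) p q ∂μ)
        = ((Matrix.trace A / ((d : ℂ) ^ 2 - 1)
              - Matrix.trace (A * swapM d) / ((d : ℂ) * ((d : ℂ) ^ 2 - 1))) •
            (1 : Matrix (Fin d × Fin d) (Fin d × Fin d) ℂ)
          + (Matrix.trace (A * swapM d) / ((d : ℂ) ^ 2 - 1)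
              - Matrix.trace A / ((d : ℂ) * ((d : ℂ) ^ 2 - 1))) • swapM d) p q := by
  intro p q
  obtain ⟨β, γ, hT⟩ := twT_eq μ hinv p q hd
  have gen : ∀ B : Matrix (Fin d × Fin d) (Fin d × Fin d) ℂ,
      (∫ u, (((star (u : Matrix (Fin d) (Fin d) ℂ)) ⊗ₖ (star (u : Matrix (Fin d) (Fin d) ℂ)))
          * B * ((u : Matrix (Fin d) (Fin d) ℂ) ⊗ₖ (u : Matrix (Fin d) (Fin d) ℂ))) p q ∂μ)
      = β * Matrix.trace B + γ * Matrix.trace (B * swapM d) := by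
    intro B
    rw [tw_integral]
    simp only [hT, mul_add, Finset.sum_add_distrib]
    congr 1
    · rw [Matrix.trace, Finset.mul_sum]
      refine Finset.sum_congr rfl fun s _ => ?_
      simp [mul_comm]
    · rw [Matrix.trace_mul_comm, Matrix.trace, Finset.mul_sum]
      refine Finset.sum_congr rfl fun s _ => ?_
      rw [Matrix.diag_apply, Matrix.mul_apply, Finset.mul_sum]
      refine Finset.sum_congr rfl fun r _ => ?_
      have : ((r.1, r.2) = (s.2, s.1)) ↔ s = Prod.swap r := by
        rcases r with ⟨r1, r2⟩
        rcases s with ⟨s1, s2⟩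
        simp only [Prod.swap, Prod.mk.injEq]
        constructor <;> (rintro ⟨h, h'⟩; exact ⟨h'.symm, h.symm⟩)
      simp only [this, swapM, Matrix.of_apply]
      ring
  have hFF : swapM d * swapM d = 1 := by
    ext ⟨i, j⟩ ⟨k, l⟩
    simp [swapM, Matrix.mul_apply, Fintype.sum_prod_type, Prod.ext_iff, ite_and, Matrix.one_apply]
  have htF : Matrix.trace (swapM d) = (d : ℂ) := by
    simp [swapM, Matrix.trace, Fintype.sum_prod_type, Prod.ext_iff, ite_and]
  have ht1 : Matrix.trace (1 : Matrix (Fin d × Fin d) (Fin d × Fin d) ℂ) = (d : ℂ) ^ 2 := by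
    simp [Matrix.trace_one, sq]
  have e1 := gen 1
  have e2 := gen (swapM d)
  simp only [mul_one, tw_unit, one_mul, ht1, htF] at e1
  simp only [mul_assoc, tw_swap_comm, hFF, ht1, htF] at e2
  simp only [← mul_assoc, tw_unit, one_mul] at e2
  simp only [integral_const, probReal_univ, one_smul] at e1 e2
  rw [gen A]
  have hd0 : (d : ℂ) ≠ 0 := by
    have : d ≠ 0 := by omega
    exact_mod_cast this
  have hd1 : (d : ℂ) ^ 2 - 1 ≠ 0 := by
    have h : d ^ 2 ≠ 1 := by nlinarith
    intro h'
    apply h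
    have : (d : ℂ) ^ 2 = 1 := by linear_combination h'
    exact_mod_cast this
  simp only [Matrix.add_apply, Matrix.smul_apply, smul_eq_mul, e1, e2]
  field_simp
  ring
end

section
/- For the Circular Orthogonal Ensemble on U(d) (symmetric unitary matrices W = u^T u with u Haar on U(d)) and any d×d matrix P, the average of W† P W equals (P^T + Tr(P)·I)/(d+1). -/
open MeasureTheory Matrix

open ComplexConjugate in
/-- quartic row monomial -/
noncomputable def quart {d : ℕ} (a i b j : Fin d) (x y z w : Fin d → ℂ) : ℂ :=
  conj (x a) * conj (y i) * z b * w j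

lemma meas_entry {d : ℕ} (k a : Fin d) :
    Measurable (fun u : Matrix.unitaryGroup (Fin d) ℂ => (u : Matrix (Fin d) (Fin d) ℂ) k a) := by
  have h1 : Measurable (fun u : Matrix.unitaryGroup (Fin d) ℂ => (u : Matrix (Fin d) (Fin d) ℂ)) :=
    measurable_subtype_coe
  have h2 : Measurable (fun M : Matrix (Fin d) (Fin d) ℂ => M k a) := by
    have h3 : Measurable (fun M : Fin d → Fin d → ℂ => M k a) := by fun_prop
    exact h3
  exact h2.comp h1

lemma meas_mul_left {d : ℕ} (v : Matrix.unitaryGroup (Fin d) ℂ) :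
    Measurable (fun u : Matrix.unitaryGroup (Fin d) ℂ => v * u) := by
  apply Measurable.subtype_mk
  have h3 : Measurable (fun (u : Matrix.unitaryGroup (Fin d) ℂ) => (fun k a =>
      ((v : Matrix (Fin d) (Fin d) ℂ) * (u : Matrix (Fin d) (Fin d) ℂ)) k a : Fin d → Fin d → ℂ)) := by
    refine measurable_pi_lambda _ fun k => measurable_pi_lambda _ fun a => ?_
    simp only [Matrix.mul_apply]
    refine Finset.measurable_sum _ fun n _ => ?_
    exact (meas_entry n a).const_mul _
  exact h3

lemma integral_left {d : ℕ} (μ : Measure ↥(Matrix.unitaryGroup (Fin d) ℂ))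
    (hinv : ∀ v : Matrix.unitaryGroup (Fin d) ℂ, Measure.map (fun u => v * u) μ = μ)
    (v : Matrix.unitaryGroup (Fin d) ℂ) (F : Matrix.unitaryGroup (Fin d) ℂ → ℂ)
    (hF : Measurable F) : ∫ u, F (v * u) ∂μ = ∫ u, F u ∂μ := by
  conv_rhs => rw [← hinv v]
  rw [integral_map (meas_mul_left v).aemeasurable hF.aestronglyMeasurable]

lemma meas_quart {d : ℕ} (a i b j k l m n : Fin d) :
    Measurable (fun u : Matrix.unitaryGroup (Fin d) ℂ =>
      quart a i b j (u.1 k) (u.1 l) (u.1 m) (u.1 n)) := by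
  unfold quart
  have hc : Measurable (fun z : ℂ => (starRingEnd ℂ) z) := Complex.continuous_conj.measurable
  exact (((hc.comp (meas_entry k a)).mul (hc.comp (meas_entry l i))).mul (meas_entry m b)).mul
    (meas_entry n j)

lemma int_quart {d : ℕ} (μ : Measure ↥(Matrix.unitaryGroup (Fin d) ℂ)) [IsProbabilityMeasure μ]
    (a i b j k l m n : Fin d) :
    Integrable (fun u : Matrix.unitaryGroup (Fin d) ℂ =>
      quart a i b j (u.1 k) (u.1 l) (u.1 m) (u.1 n)) μ := by
  refine Integrable.of_bound (meas_quart a i b j k l m n).aestronglyMeasurable 1 ?_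
  refine Filter.Eventually.of_forall fun u => ?_
  have h := fun p q => entry_norm_bound_of_unitary u.2 p q
  unfold quart
  simp only [norm_mul, RCLike.norm_conj]
  have h1 := mul_le_one₀ (h k a) (norm_nonneg _) (h l i)
  have h2 := mul_le_one₀ h1 (norm_nonneg _) (h m b)
  exact mul_le_one₀ h2 (norm_nonneg _) (h n j)

lemma exists_row {d : ℕ} (k : Fin d) (y : Fin d → ℂ) (hy : ∑ n, ‖y n‖ ^ 2 = 1) :
    ∃ v : Matrix.unitaryGroup (Fin d) ℂ, v.1 k = y := by
  let w : Fin d → EuclideanSpace ℂ (Fin d) := fun _ => WithLp.toLp 2 y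
  have hw : Orthonormal ℂ (({k} : Set (Fin d)).domRestrict w) := by
    constructor
    · intro n
      change ‖(WithLp.toLp 2 y : EuclideanSpace ℂ (Fin d))‖ = 1
      simp [EuclideanSpace.norm_eq, hy]
    · intro p q hpq
      exact absurd (Subsingleton.elim p q) hpq
  obtain ⟨B, hB⟩ := hw.exists_orthonormalBasis_extension_of_card_eq (by simp)
  have hm := (EuclideanSpace.basisFun (Fin d) ℂ).toMatrix_orthonormalBasis_mem_unitary B
  refine ⟨⟨((EuclideanSpace.basisFun (Fin d) ℂ).toBasis.toMatrix B)ᵀ, ?_⟩, ?_⟩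
  · exact Matrix.transpose_mem_unitaryGroup_iff.2 hm
  · ext n
    simp [Module.Basis.toMatrix_apply, hB k (Set.mem_singleton k), w]

lemma row_mul {d : ℕ} (v u : Matrix.unitaryGroup (Fin d) ℂ) (k : Fin d) :
    (v * u).1 k = fun c => ∑ n, v.1 k n * u.1 n c := by
  ext c
  simp [Matrix.mul_apply]

lemma step1 {d : ℕ} (μ : Measure ↥(Matrix.unitaryGroup (Fin d) ℂ))
    (hinv : ∀ v : Matrix.unitaryGroup (Fin d) ℂ, Measure.map (fun u => v * u) μ = μ)
    (a i b j : Fin d) (k : Fin d) (y : Fin d → ℂ) (hy : ∑ n, ‖y n‖ ^ 2 = 1) :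
    ∫ u, (fun x => quart a i b j x x x x) (fun c => ∑ n, y n * u.1 n c) ∂μ
      = ∫ u, quart a i b j (u.1 k) (u.1 k) (u.1 k) (u.1 k) ∂μ := by
  obtain ⟨v, hv⟩ := exists_row k y hy
  rw [← integral_left μ hinv v _ (meas_quart a i b j k k k k)]
  simp only [row_mul, hv]

lemma step1' {d : ℕ} (μ : Measure ↥(Matrix.unitaryGroup (Fin d) ℂ))
    (hinv : ∀ v : Matrix.unitaryGroup (Fin d) ℂ, Measure.map (fun u => v * u) μ = μ)
    (a i b j : Fin d) (k l : Fin d) (hkl : k ≠ l) (ω : ℂ) (hω : ‖ω‖ = 1) :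
    ∫ u, (fun x => quart a i b j x x x x) (fun c => 3 / 5 * u.1 k c + 4 / 5 * ω * u.1 l c) ∂μ
      = ∫ u, quart a i b j (u.1 k) (u.1 k) (u.1 k) (u.1 k) ∂μ := by
  rw [← step1 μ hinv a i b j k (fun n => if n = k then 3 / 5 else if n = l then 4 / 5 * ω else 0)]
  · congr 1
    ext u
    congr 1
    ext c
    rw [Fintype.sum_eq_add k l hkl]
    · simp [hkl.symm]
    · rintro x ⟨h1, h2⟩
      simp [h1, h2]
  · rw [Fintype.sum_eq_add k l hkl]
    · simp [hkl.symm, hω]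
      norm_num
    · rintro x ⟨h1, h2⟩
      simp [h1, h2]

lemma const_row {d : ℕ} (μ : Measure ↥(Matrix.unitaryGroup (Fin d) ℂ))
    (hinv : ∀ v : Matrix.unitaryGroup (Fin d) ℂ, Measure.map (fun u => v * u) μ = μ)
    (a i b j : Fin d) (k l : Fin d) :
    ∫ u, quart a i b j (u.1 k) (u.1 k) (u.1 k) (u.1 k) ∂μ
      = ∫ u, quart a i b j (u.1 l) (u.1 l) (u.1 l) (u.1 l) ∂μ := by
  have hy : ∑ n, ‖(Pi.single k 1 : Fin d → ℂ) n‖ ^ 2 = 1 := by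
    rw [Fintype.sum_eq_single k]
    · simp
    · intro x hx
      simp [hx]
  rw [← step1 μ hinv a i b j k _ hy, ← step1 μ hinv a i b j l _ hy]

lemma pointwise {d : ℕ} (a i b j : Fin d) (x y : Fin d → ℂ) :
    (fun x => quart a i b j x x x x) (fun c => 3 / 5 * x c + 4 / 5 * 1 * y c)
    + (fun x => quart a i b j x x x x) (fun c => 3 / 5 * x c + 4 / 5 * (-1) * y c)
    + (fun x => quart a i b j x x x x) (fun c => 3 / 5 * x c + 4 / 5 * Complex.I * y c)
    + (fun x => quart a i b j x x x x) (fun c => 3 / 5 * x c + 4 / 5 * (-Complex.I) * y c)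
    = 4 * (81 / 625 * quart a i b j x x x x + 256 / 625 * quart a i b j y y y y
      + 144 / 625 * (quart a i b j x y x y + quart a i b j x y y x
        + quart a i b j y x y x + quart a i b j y x x y)) := by
  have hI := Complex.I_sq
  have hI4 : Complex.I ^ 4 = 1 := Complex.I_pow_four
  simp only [quart, map_add, map_mul, map_neg, map_one, Complex.conj_I, map_div₀, map_ofNat]
  ring_nf
  simp only [hI, hI4]
  ring

lemma integral_four {Ω : Type*} [MeasurableSpace Ω] {μ : Measure Ω} {f g h k : Ω → ℂ}
    (hf : Integrable f μ) (hg : Integrable g μ) (hh : Integrable h μ) (hk : Integrable k μ) :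
    ∫ u, (f u + g u + h u + k u) ∂μ =
      ∫ u, f u ∂μ + ∫ u, g u ∂μ + ∫ u, h u ∂μ + ∫ u, k u ∂μ := by
  have h1 := integral_add hf hg
  have h2 := integral_add (hf.add hg) hh
  have h3 := integral_add ((hf.add hg).add hh) hk
  simp only [Pi.add_apply] at h1 h2 h3
  rw [h3, h2, h1]

lemma integral_comb {Ω : Type*} [MeasurableSpace Ω] {μ : Measure Ω} {f g h : Ω → ℂ}
    (hf : Integrable f μ) (hg : Integrable g μ) (hh : Integrable h μ) :
    ∫ u, 4 * (81 / 625 * f u + 256 / 625 * g u + 144 / 625 * h u) ∂μ =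
      4 * (81 / 625 * ∫ u, f u ∂μ + 256 / 625 * ∫ u, g u ∂μ + 144 / 625 * ∫ u, h u ∂μ) := by
  simp only [← integral_const_mul]
  have h1 := integral_add (hf.const_mul (81 / 625)) (hg.const_mul (256 / 625))
  have h2 := integral_add ((hf.const_mul (81 / 625)).add (hg.const_mul (256 / 625)))
    (hh.const_mul (144 / 625))
  simp only [Pi.add_apply] at h1 h2
  rw [← h1, ← h2, integral_const_mul]

lemma step2 {d : ℕ} (μ : Measure ↥(Matrix.unitaryGroup (Fin d) ℂ)) [IsProbabilityMeasure μ]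
    (hinv : ∀ v : Matrix.unitaryGroup (Fin d) ℂ, Measure.map (fun u => v * u) μ = μ)
    (a i b j : Fin d) (k l : Fin d) (G : Fin d → Fin d → Fin d → Fin d → ℂ)
    (hG : ∀ k l m n, G k l m n = ∫ u, quart a i b j (u.1 k) (u.1 l) (u.1 m) (u.1 n) ∂μ) :
    (G k l k l + G k l l k) + (G l k l k + G l k k l) = 2 * G k k k k * (if k = l then 2 else 1) := by
  by_cases hkl : k = l
  · subst hkl
    simp
    ring
  have hi := int_quart μ a i b j
  have e1 := step1' μ hinv a i b j k l hkl 1 (by simp)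
  have e2 := step1' μ hinv a i b j k l hkl (-1) (by simp)
  have e3 := step1' μ hinv a i b j k l hkl Complex.I (by simp)
  have e4 := step1' μ hinv a i b j k l hkl (-Complex.I) (by simp)
  have hquartInt : ∀ p q : ℂ, Integrable (fun u : Matrix.unitaryGroup (Fin d) ℂ =>
      (fun x => quart a i b j x x x x) (fun c => p * u.1 k c + q * u.1 l c)) μ := by
    intro p q
    have : (fun u : Matrix.unitaryGroup (Fin d) ℂ =>
      (fun x => quart a i b j x x x x) (fun c => p * u.1 k c + q * u.1 l c)) =
      fun u => ∑ s : Fin 2 × Fin 2 × Fin 2 × Fin 2,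
        (starRingEnd ℂ (![p, q] s.1) * starRingEnd ℂ (![p, q] s.2.1) * (![p, q] s.2.2.1)
          * (![p, q] s.2.2.2)) *
        quart a i b j (u.1 (![k, l] s.1)) (u.1 (![k, l] s.2.1)) (u.1 (![k, l] s.2.2.1))
          (u.1 (![k, l] s.2.2.2)) := by
      ext u
      simp only [quart, Fintype.sum_prod_type, Fin.sum_univ_two, map_add, map_mul,
        Matrix.cons_val_zero, Matrix.cons_val_one]
      ring
    rw [this]
    exact integrable_finsetSum _ fun s _ => (hi _ _ _ _).const_mul _
  have key : ∫ u : Matrix.unitaryGroup (Fin d) ℂ, _ ∂μ = ∫ u, _ ∂μ :=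
    congrArg (fun F => ∫ u, F u ∂μ)
      (funext fun u : Matrix.unitaryGroup (Fin d) ℂ => pointwise a i b j (u.1 k) (u.1 l))
  have L := integral_four (hquartInt (3 / 5) (4 / 5 * 1)) (hquartInt (3 / 5) (4 / 5 * (-1)))
    (hquartInt (3 / 5) (4 / 5 * Complex.I)) (hquartInt (3 / 5) (4 / 5 * (-Complex.I)))
  have R1 := integral_four (hi k l k l) (hi k l l k) (hi l k l k) (hi l k k l)
  have R2 := integral_comb (hi k k k k) (hi l l l l)
    ((((hi k l k l).add (hi k l l k)).add (hi l k l k)).add (hi l k k l))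
  replace key := L.symm.trans (key.trans R2)
  replace key := key.trans (congrArg (fun z => 4 * (81 / 625 * _ + 256 / 625 * _ + 144 / 625 * z)) R1)
  rw [e1, e2, e3, e4, const_row μ hinv a i b j l k] at key
  simp only [← hG] at key
  simp only [hkl, if_false]
  linear_combination (-625 / 576 : ℂ) * key

lemma unit_col {d : ℕ} (u : Matrix.unitaryGroup (Fin d) ℂ) (a b : Fin d) :
    ∑ k, starRingEnd ℂ (u.1 k a) * u.1 k b = if a = b then 1 else 0 := by
  have h := congrFun (congrFun (Matrix.mem_unitaryGroup_iff'.1 u.2) a) b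
  simpa [Matrix.mul_apply, Matrix.star_apply, Matrix.one_apply] using h

lemma sumA {d : ℕ} (μ : Measure ↥(Matrix.unitaryGroup (Fin d) ℂ)) [IsProbabilityMeasure μ]
    (a i b j : Fin d) :
    ∑ k, ∑ l, ∫ u, quart a i b j (u.1 k) (u.1 l) (u.1 k) (u.1 l) ∂μ =
      (if a = b then 1 else 0) * (if i = j then 1 else 0) := by
  have : ∀ u : Matrix.unitaryGroup (Fin d) ℂ,
      ∑ k, ∑ l, quart a i b j (u.1 k) (u.1 l) (u.1 k) (u.1 l) =
      (if a = b then 1 else 0) * (if i = j then 1 else 0) := by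
    intro u
    rw [← unit_col u a b, ← unit_col u i j, Finset.sum_mul_sum]
    refine Finset.sum_congr rfl fun k _ => Finset.sum_congr rfl fun l _ => ?_
    simp only [quart]
    ring
  have h2 : ∫ u, (∑ k, ∑ l, quart a i b j (u.1 k) (u.1 l) (u.1 k) (u.1 l)) ∂μ =
      (if a = b then 1 else 0) * (if i = j then 1 else 0) := by
    simp_rw [this]
    simp
  rw [← h2, integral_finsetSum _ fun k _ => integrable_finsetSum _ fun l _ => int_quart μ _ _ _ _ _ _ _ _]
  refine Finset.sum_congr rfl fun k _ => ?_
  rw [integral_finsetSum _ fun l _ => int_quart μ _ _ _ _ _ _ _ _]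

lemma quart_swap {d : ℕ} (a i b j : Fin d) (x y z w : Fin d → ℂ) :
    quart a i b j x y z w = quart a i j b x y w z := by
  simp only [quart]
  ring

lemma offdiag {d : ℕ} (μ : Measure ↥(Matrix.unitaryGroup (Fin d) ℂ))
    (hinv : ∀ v : Matrix.unitaryGroup (Fin d) ℂ, Measure.map (fun u => v * u) μ = μ)
    (a i b j : Fin d) (k l : Fin d) (hkl : k ≠ l) :
    ∫ u, quart a i b j (u.1 k) (u.1 k) (u.1 l) (u.1 l) ∂μ = 0 := by
  let D : Fin d → ℂ := fun n => if n = k then Complex.I else 1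
  have hD : Matrix.diagonal D ∈ Matrix.unitaryGroup (Fin d) ℂ := by
    rw [Matrix.mem_unitaryGroup_iff, Matrix.star_eq_conjTranspose, Matrix.diagonal_conjTranspose,
      Matrix.diagonal_mul_diagonal, ← Matrix.diagonal_one]
    congr 1
    ext n
    by_cases h : n = k <;> simp [D, h]
  have h := integral_left μ hinv ⟨_, hD⟩ _ (meas_quart a i b j k k l l)
  have h2 : ∀ u : Matrix.unitaryGroup (Fin d) ℂ,
      quart a i b j (((⟨_, hD⟩ : Matrix.unitaryGroup (Fin d) ℂ) * u).1 k)
        (((⟨_, hD⟩ : Matrix.unitaryGroup (Fin d) ℂ) * u).1 k)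
        (((⟨_, hD⟩ : Matrix.unitaryGroup (Fin d) ℂ) * u).1 l)
        (((⟨_, hD⟩ : Matrix.unitaryGroup (Fin d) ℂ) * u).1 l) =
      - quart a i b j (u.1 k) (u.1 k) (u.1 l) (u.1 l) := by
    intro u
    have hI := Complex.I_sq
    simp only [quart, Submonoid.coe_mul, Matrix.diagonal_mul, D, if_true, hkl.symm, if_false,
      map_mul, Complex.conj_I]
    linear_combination (starRingEnd ℂ (u.1 k a) * starRingEnd ℂ (u.1 k i) * u.1 l b * u.1 l j) * hI
  simp only [h2, integral_neg] at h
  linear_combination (-1 / 2 : ℂ) * h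

lemma diag_sum {d : ℕ} (μ : Measure ↥(Matrix.unitaryGroup (Fin d) ℂ)) [IsProbabilityMeasure μ]
    (hinv : ∀ v : Matrix.unitaryGroup (Fin d) ℂ, Measure.map (fun u => v * u) μ = μ)
    (a i b j : Fin d) :
    ∑ k, ∑ l, ∫ u, quart a i b j (u.1 k) (u.1 k) (u.1 l) (u.1 l) ∂μ =
      ((d : ℂ) + 1)⁻¹ * ((if a = b then 1 else 0) * (if i = j then 1 else 0)
        + (if a = j then 1 else 0) * (if i = b then 1 else 0)) := by
  have hA := sumA μ a i b j
  have hB := sumA μ a i j b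
  simp only [fun x y z w => quart_swap a i j b x y z w] at hB
  let G : Fin d → Fin d → Fin d → Fin d → ℂ :=
    fun k l m n => ∫ u, quart a i b j (u.1 k) (u.1 l) (u.1 m) (u.1 n) ∂μ
  have hS := fun k l => step2 μ hinv a i b j k l G (fun _ _ _ _ => rfl)
  have hc : ∀ k, G k k k k = G a a a a := fun k => const_row μ hinv a i b j k a
  have hoff : ∀ k l, k ≠ l → G k k l l = 0 := fun k l h => offdiag μ hinv a i b j k l h
  change ∑ k, ∑ l, G k l k l = _ at hA
  change ∑ k, ∑ l, G k l l k = _ at hB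
  change ∑ k, ∑ l, G k k l l = _
  have hT : ∑ k, ∑ l, G k k l l = d * G a a a a := by
    have : ∀ k, ∑ l, G k k l l = G a a a a := by
      intro k
      rw [Fintype.sum_eq_single k (fun l hl => hoff k l hl.symm), hc]
    simp [this]
  have hA' : ∑ k, ∑ l, G l k l k = ∑ k, ∑ l, G k l k l := Finset.sum_comm
  have hB' : ∑ k, ∑ l, G l k k l = ∑ k, ∑ l, G k l l k := Finset.sum_comm
  have hsum : ∑ k, ∑ l, ((G k l k l + G k l l k) + (G l k l k + G l k k l)) =
      2 * G a a a a * (d * (d + 1)) := by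
    simp only [hS, hc, ← Finset.mul_sum]
    congr 1
    have : ∀ k : Fin d, ∑ l, (if k = l then (2 : ℂ) else 1) = d + 1 := by
      intro k
      have : ∀ l, (if k = l then (2 : ℂ) else 1) = 1 + if k = l then 1 else 0 := by
        intro l
        split_ifs <;> norm_num
      simp [this, Finset.sum_add_distrib]
    simp [this]
    ring
  simp only [Finset.sum_add_distrib, hA', hB', hA, hB] at hsum
  have hd : (d : ℂ) + 1 ≠ 0 := Nat.cast_add_one_ne_zero d
  rw [hT]
  field_simp
  linear_combination (-1 / 2 : ℂ) * hsum

/-- For the Circular Orthogonal Ensemble on `U(d)` (matrices `W = uᵀu` with `u` Haar on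
`U(d)`, i.e. `u` distributed according to a left-invariant probability measure) and any
`d×d` matrix `P`: `E[W† P W] = (Pᵀ + Tr(P)·I)/(d+1)`. -/
theorem stmt_14 (d : ℕ) (P : Matrix (Fin d) (Fin d) ℂ)
    (μ : Measure ↥(Matrix.unitaryGroup (Fin d) ℂ)) [IsProbabilityMeasure μ]
    (hinv : ∀ v : Matrix.unitaryGroup (Fin d) ℂ,
      Measure.map (fun u => v * u) μ = μ) :
    ∀ i j : Fin d,
      (∫ u, (star ((u : Matrix (Fin d) (Fin d) ℂ)ᵀ * (u : Matrix (Fin d) (Fin d) ℂ)) * P *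
          ((u : Matrix (Fin d) (Fin d) ℂ)ᵀ * (u : Matrix (Fin d) (Fin d) ℂ))) i j ∂μ)
        = ((((d : ℂ) + 1)⁻¹) •
            (Pᵀ + Matrix.trace P • (1 : Matrix (Fin d) (Fin d) ℂ))) i j := by
  intro i j
  have hexp : ∀ u : Matrix.unitaryGroup (Fin d) ℂ,
      (star ((u : Matrix (Fin d) (Fin d) ℂ)ᵀ * (u : Matrix (Fin d) (Fin d) ℂ)) * P *
          ((u : Matrix (Fin d) (Fin d) ℂ)ᵀ * (u : Matrix (Fin d) (Fin d) ℂ))) i j =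
      ∑ b, ∑ a, P a b * ∑ k, ∑ l, quart a i b j (u.1 k) (u.1 k) (u.1 l) (u.1 l) := by
    intro u
    rw [Matrix.mul_apply]
    refine Finset.sum_congr rfl fun b _ => ?_
    rw [Matrix.mul_apply, Finset.sum_mul]
    refine Finset.sum_congr rfl fun a _ => ?_
    have e : ∑ k, ∑ l, quart a i b j (u.1 k) (u.1 k) (u.1 l) (u.1 l) =
        (∑ k, starRingEnd ℂ (u.1 k a) * starRingEnd ℂ (u.1 k i)) * ∑ l, u.1 l b * u.1 l j := by
      rw [Finset.sum_mul_sum]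
      refine Finset.sum_congr rfl fun k _ => Finset.sum_congr rfl fun l _ => ?_
      simp only [quart]
      ring
    rw [e, Matrix.star_apply, Matrix.mul_apply, Matrix.mul_apply]
    simp only [Matrix.transpose_apply, star_sum, star_mul', RCLike.star_def]
    ring
  simp_rw [hexp]
  have hI := fun a b k l => int_quart μ a i b j k k l l
  have hI1 := fun a b k => integrable_finsetSum Finset.univ fun l _ => hI a b k l
  have hI2 := fun a b => integrable_finsetSum Finset.univ fun k _ => hI1 a b k
  rw [integral_finsetSum _ fun b _ => integrable_finsetSum _ fun a _ => (hI2 a b).const_mul _]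
  have hstep : ∀ b, ∫ u : Matrix.unitaryGroup (Fin d) ℂ,
      ∑ a, P a b * ∑ k, ∑ l, quart a i b j (u.1 k) (u.1 k) (u.1 l) (u.1 l) ∂μ =
      ∑ a, P a b * (((d : ℂ) + 1)⁻¹ * ((if a = b then 1 else 0) * (if i = j then 1 else 0)
        + (if a = j then 1 else 0) * (if i = b then 1 else 0))) := by
    intro b
    rw [integral_finsetSum _ fun a _ => (hI2 a b).const_mul _]
    refine Finset.sum_congr rfl fun a _ => ?_
    rw [integral_const_mul, integral_finsetSum _ fun k _ => hI1 a b k, ← diag_sum μ hinv]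
    congr 1
    refine Finset.sum_congr rfl fun k _ => ?_
    rw [integral_finsetSum _ fun l _ => hI a b k l]
  simp only [hstep]
  simp only [Matrix.smul_apply, Matrix.add_apply,
    Matrix.transpose_apply, Matrix.one_apply, Matrix.trace, Matrix.diag_apply, smul_eq_mul]
  have e1 : ∀ b, ∑ a, P a b * (((d : ℂ) + 1)⁻¹ *
      ((if a = b then 1 else 0) * (if i = j then 1 else 0)
        + (if a = j then 1 else 0) * (if i = b then 1 else 0))) =
      ((d : ℂ) + 1)⁻¹ * (P b b * (if i = j then 1 else 0) + P j b * (if i = b then 1 else 0)) := by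
    intro b
    have : ∀ a, P a b * (((d : ℂ) + 1)⁻¹ *
      ((if a = b then 1 else 0) * (if i = j then 1 else 0)
        + (if a = j then 1 else 0) * (if i = b then 1 else 0))) =
      (if a = b then ((d : ℂ) + 1)⁻¹ * (P a b * (if i = j then 1 else 0)) else 0) +
      (if a = j then ((d : ℂ) + 1)⁻¹ * (P a b * (if i = b then 1 else 0)) else 0) := by
      intro a
      split_ifs <;> ring
    simp only [this, Finset.sum_add_distrib, Finset.sum_ite_eq', Finset.mem_univ, if_true]
    ring
  simp only [e1, ← Finset.mul_sum, Finset.sum_add_distrib, ← Finset.sum_mul]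
  simp only [mul_ite, mul_one, mul_zero, Finset.sum_ite_eq, Finset.mem_univ, if_true]
  ring
end
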